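/- Let n > m ≥ 1, let r = X_a s ∈ uR^X_m be a ranker starting with an X-letter and r' = Y_b s' ∈ uR^Y_m a ranker starting with a Y-letter, with |r| + |r'| ≤ n. Let u, v ∈ A* be such that r and r' are condensed on both u and v. If u ⊳_{m+1,n} v or u ⊲_{m+1,n} v, then ord(r(u), r'(u)) = ord(r(v), r'(v)). -/

import Mathlib

namespace RankerPaper

variable {A : Type*} [DecidableEq A]

/-- Letters of rankers: `X a` ("next `a` to the right") and `Y a` ("next `a` to the left"). -/
inductive RLetter (A : Type*) where
  | X : A → RLetter A
  | Y : A → RLetter A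
  deriving DecidableEq

/-- Least `a`-position of `u` strictly greater than `q` (positions are 1-indexed). -/
def nextOcc (u : List A) (a : A) (q : ℕ) : Option ℕ :=
  ((List.range (u.length + 2)).filter (fun i => decide (q < i ∧ u[i-1]? = some a))).head?

/-- Greatest `a`-position of `u` strictly less than `q` (positions are 1-indexed). -/
def prevOcc (u : List A) (a : A) (q : ℕ) : Option ℕ :=
  ((List.range (u.length + 2)).filter
    (fun i => decide (1 ≤ i ∧ i < q ∧ u[i-1]? = some a))).getLast?

/-- One evaluation step of a ranker letter from position `q`. -/
def stepR (u : List A) : RLetter A → ℕ → Option ℕ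
  | .X a, q => nextOcc u a q
  | .Y a, q => prevOcc u a q

/-- Evaluation of a ranker from position `q`, processing letters left to right. -/
def evalFrom (u : List A) : List (RLetter A) → ℕ → Option ℕ
  | [], q => some q
  | z :: r, q => (stepR u z q).bind (evalFrom u r)

/-- Starting position: `0` for an `X`-letter, `|u|+1` for a `Y`-letter. -/
def startPos (u : List A) : RLetter A → ℕ
  | .X _ => 0
  | .Y _ => u.length + 1

/-- The position `r(u)` defined by the ranker `r` on `u` (`none` if undefined;
empty rankers are considered undefined, rankers being nonempty words). -/
def evalR (u : List A) (r : List (RLetter A)) : Option ℕ :=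
  match r with
  | [] => none
  | z :: t => evalFrom u (z :: t) (startPos u z)

/-- `r` is defined on `u`. -/
def Defined (u : List A) (r : List (RLetter A)) : Prop := (evalR u r).isSome

/-- The position `r(u)` (defaulting to `0` when undefined). -/
def pos (u : List A) (r : List (RLetter A)) : ℕ := (evalR u r).getD 0

/-- Do two ranker letters have the same direction? -/
def sameDir : RLetter A → RLetter A → Bool
  | .X _, .X _ => true
  | .Y _, .Y _ => true
  | _, _ => false

/-- Number of (alternating) blocks of a ranker. -/
def numBlocks : List (RLetter A) → ℕ
  | [] => 0
  | [_] => 1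
  | z :: w :: t => (if sameDir z w then 0 else 1) + numBlocks (w :: t)

def startsX (r : List (RLetter A)) : Prop := ∃ a t, r = RLetter.X a :: t
def startsY (r : List (RLetter A)) : Prop := ∃ a t, r = RLetter.Y a :: t
def endsX (r : List (RLetter A)) : Prop := ∃ a, r.getLast? = some (RLetter.X a)
def endsY (r : List (RLetter A)) : Prop := ∃ a, r.getLast? = some (RLetter.Y a)

/-- `R^X_{m,n}`: rankers with exactly `m` blocks, depth `n`, starting with an `X`-block. -/
def RX (m n : ℕ) (r : List (RLetter A)) : Prop :=
  numBlocks r = m ∧ r.length = n ∧ startsX r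

/-- `R^Y_{m,n}`: rankers with exactly `m` blocks, depth `n`, starting with a `Y`-block. -/
def RY (m n : ℕ) (r : List (RLetter A)) : Prop :=
  numBlocks r = m ∧ r.length = n ∧ startsY r

/-- `uR^X_{m,n}`. -/
def uRX (m n : ℕ) (r : List (RLetter A)) : Prop :=
  (∃ m' n', m' ≤ m ∧ n' ≤ n ∧ RX m' n' r) ∨ (∃ m' n', m' < m ∧ n' < n ∧ RY m' n' r)

/-- `uR^Y_{m,n}`. -/
def uRY (m n : ℕ) (r : List (RLetter A)) : Prop :=
  (∃ m' n', m' ≤ m ∧ n' ≤ n ∧ RY m' n' r) ∨ (∃ m' n', m' < m ∧ n' < n ∧ RX m' n' r)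

/-- `uR_{m,n} = uR^X_{m,n} ∪ uR^Y_{m,n}`. -/
def uR (m n : ℕ) (r : List (RLetter A)) : Prop := uRX m n r ∨ uRY m n r

/-- `uR^X_m = ∪_{n ≥ m} uR^X_{m,n}`. -/
def uRXm (m : ℕ) (r : List (RLetter A)) : Prop := ∃ n, m ≤ n ∧ uRX m n r

/-- `uR^Y_m = ∪_{n ≥ m} uR^Y_{m,n}`. -/
def uRYm (m : ℕ) (r : List (RLetter A)) : Prop := ∃ n, m ≤ n ∧ uRY m n r

/-- `r = Z₁ ⋯ Z_n` is condensed on `u`: it is defined on `u` and there is a chain of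
open intervals `(0;|u|+1) = (i₀;j₀) ⊃ (i₁;j₁) ⊃ ⋯ ⊃ (i_{n-1};j_{n-1}) ∋ r(u)`
updated according to the pairs `Z_ℓ Z_{ℓ+1}`. -/
def Condensed (u : List A) (r : List (RLetter A)) : Prop :=
  ∃ (p : ℕ) (i j : ℕ → ℕ),
    evalR u r = some p ∧
    i 0 = 0 ∧ j 0 = u.length + 1 ∧
    (∀ ℓ a b, 1 ≤ ℓ → r[ℓ-1]? = some (RLetter.X a) → r[ℓ]? = some (RLetter.X b) →
        nextOcc u a (i (ℓ-1)) = some (i ℓ) ∧ j ℓ = j (ℓ-1)) ∧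
    (∀ ℓ a b, 1 ≤ ℓ → r[ℓ-1]? = some (RLetter.Y a) → r[ℓ]? = some (RLetter.Y b) →
        i ℓ = i (ℓ-1) ∧ prevOcc u a (j (ℓ-1)) = some (j ℓ)) ∧
    (∀ ℓ a b, 1 ≤ ℓ → r[ℓ-1]? = some (RLetter.X a) → r[ℓ]? = some (RLetter.Y b) →
        i ℓ = i (ℓ-1) ∧ nextOcc u a (i (ℓ-1)) = some (j ℓ)) ∧
    (∀ ℓ a b, 1 ≤ ℓ → r[ℓ-1]? = some (RLetter.Y a) → r[ℓ]? = some (RLetter.X b) →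
        prevOcc u a (j (ℓ-1)) = some (i ℓ) ∧ j ℓ = j (ℓ-1)) ∧
    (∀ ℓ, 1 ≤ ℓ → ℓ < r.length →
        i (ℓ-1) ≤ i ℓ ∧ j ℓ ≤ j (ℓ-1) ∧ (i (ℓ-1) < i ℓ ∨ j ℓ < j (ℓ-1))) ∧
    i (r.length - 1) < p ∧ p < j (r.length - 1)

/-- `u` and `v` agree on rankers from the set `R`. -/
def AgreeDef (R : List (RLetter A) → Prop) (u v : List A) : Prop :=
  ∀ r, R r → (Defined u r ↔ Defined v r)

/-- `u` and `v` agree on condensed rankers from the set `R`. -/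
def AgreeCond (R : List (RLetter A) → Prop) (u v : List A) : Prop :=
  ∀ r, R r → (Condensed u r ↔ Condensed v r)

/-- `u ⊳_{m,n} v`. -/
def trir (m n : ℕ) (u v : List A) : Prop := AgreeCond (uRX m n) u v

/-- `u ⊲_{m,n} v`. -/
def tril (m n : ℕ) (u v : List A) : Prop := AgreeCond (uRY m n) u v

/-- The alphabet (set of letters) of a word. -/
def alph (u : List A) : Finset A := u.toFinset

/-- Condition (WI 1). -/
def WI1 (m n : ℕ) (u v : List A) : Prop := AgreeDef (uR m n) u v

/-- Condition (WI 2). -/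
def WI2 (m n : ℕ) (u v : List A) : Prop :=
  ∀ r r', uR m n r → uR (m-1) (n-1) r' →
    Defined u r → Defined v r → Defined u r' → Defined v r' →
    compare (pos u r) (pos u r') = compare (pos v r) (pos v r')

/-- Condition (WI 3). -/
def WI3 (m n : ℕ) (u v : List A) : Prop :=
  ∀ r r', uR m n r → uR m (n-1) r' →
    ((endsX r ∧ endsY r') ∨ (endsY r ∧ endsX r')) →
    Defined u r → Defined v r → Defined u r' → Defined v r' →
    compare (pos u r) (pos u r') = compare (pos v r) (pos v r')

/-- Condition (WI 1c). -/
def WI1c (m n : ℕ) (u v : List A) : Prop := AgreeCond (uR m n) u v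

/-- Condition (WI 2c). -/
def WI2c (m n : ℕ) (u v : List A) : Prop :=
  ∀ r r', uR m n r → uR (m-1) (n-1) r' →
    Condensed u r → Condensed v r → Condensed u r' → Condensed v r' →
    compare (pos u r) (pos u r') = compare (pos v r) (pos v r')

/-- Condition (WI 3c). -/
def WI3c (m n : ℕ) (u v : List A) : Prop :=
  ∀ r r', uR m n r → uR m (n-1) r' →
    ((endsX r ∧ endsY r') ∨ (endsY r ∧ endsX r')) →
    Condensed u r → Condensed v r → Condensed u r' → Condensed v r' →
    compare (pos u r) (pos u r') = compare (pos v r) (pos v r')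


/-!
A condensed ranker visits its positions inside a shrinking chain of intervals whose endpoints are
positions of shorter prefixes. By induction these endpoints are ordered alike in both words, and by
order duality `r'` may be assumed to end in `X_d`, so that `r'` leads to the first `d` of its
interval. If `r'` lies to the left of `r` in `u`, then either the endpoints already show that it
does so in `v`, or `r Y_d` is condensed on `u`, hence on `v`, and the `d` it finds in `v` bounds the
position of `r'` from above, provided it lies to the right of the left endpoint of `r'`. This last
point is an instance of the induction hypothesis as long as `r Y_d` has at most `m` blocks.
Otherwise `r` has `m` blocks and ends in some `X_c`, and by parity `r'` has fewer, so that `r' Y_c`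
lies in the set of rankers on which the words agree: if `r'` lay to the right of `r` in `v`, then
`r' Y_c` would be condensed on `v` but not on `u`.
-/

section Blocks

variable {α : Type*}

/-- The direction of a letter, `true` for `X` and `false` for `Y`. -/
def RLetter.isX : RLetter α → Bool
  | .X _ => true
  | .Y _ => false

/-- The mirror image of a letter, which reads the same letter of the word in the opposite
direction. -/
def RLetter.flip : RLetter α → RLetter α
  | .X a => .Y a
  | .Y a => .X a

@[simp]
theorem RLetter.flip_flip (z : RLetter α) : z.flip.flip = z := by
  cases z <;> rfl

@[simp]
theorem RLetter.isX_flip (z : RLetter α) : z.flip.isX = !z.isX := by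
  cases z <;> rfl

theorem map_flip_map_flip (r : List (RLetter α)) :
    (r.map RLetter.flip).map RLetter.flip = r := by
  simp [Function.comp_def]

theorem sameDir_eq_beq_isX (y z : RLetter α) : sameDir y z = (y.isX == z.isX) := by
  cases y <;> cases z <;> rfl

theorem numBlocks_concat_concat (r : List (RLetter α)) (y z : RLetter α) :
    numBlocks (r ++ [y] ++ [z]) = numBlocks (r ++ [y]) + if sameDir y z then 0 else 1 := by
  fun_induction numBlocks r with
  | case1 => simp [numBlocks, add_comm]
  | case2 => simp only [List.cons_append, List.nil_append, numBlocks]; omega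
  | case3 x w t ih => simp only [List.cons_append, numBlocks] at ih ⊢; omega

theorem numBlocks_concat_le (r : List (RLetter α)) (z : RLetter α) :
    numBlocks (r ++ [z]) ≤ numBlocks r + 1 := by
  obtain rfl | ⟨r, y, rfl⟩ := r.eq_nil_or_concat'
  · simp [numBlocks]
  · rw [numBlocks_concat_concat]
    split_ifs <;> omega

theorem numBlocks_le_concat (r : List (RLetter α)) (z : RLetter α) :
    numBlocks r ≤ numBlocks (r ++ [z]) := by
  obtain rfl | ⟨r, y, rfl⟩ := r.eq_nil_or_concat'
  · simp [numBlocks]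
  · rw [numBlocks_concat_concat]
    omega

theorem numBlocks_le_of_prefix {t r : List (RLetter α)} (h : t <+: r) :
    numBlocks t ≤ numBlocks r := by
  obtain ⟨s, rfl⟩ := h
  induction s using List.reverseRecOn with
  | nil => simp
  | append_singleton s z ih =>
    rw [← List.append_assoc]
    exact ih.trans (numBlocks_le_concat _ z)

theorem numBlocks_pos {r : List (RLetter α)} (h : r ≠ []) : 0 < numBlocks r := by
  fun_induction numBlocks r <;> simp_all

theorem numBlocks_map_flip (r : List (RLetter α)) :
    numBlocks (r.map RLetter.flip) = numBlocks r := by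
  fun_induction numBlocks r <;> simp_all [numBlocks, sameDir_eq_beq_isX]

/-- The first letter of the ranker `r` has direction `δ`; in particular `r` is nonempty. -/
def StartsDir (δ : Bool) (r : List (RLetter α)) : Prop :=
  r.head?.map RLetter.isX = some δ

theorem StartsDir.ne_nil {δ : Bool} {r : List (RLetter α)} (h : StartsDir δ r) : r ≠ [] := by
  rintro rfl
  simp [StartsDir] at h

theorem StartsDir.append {δ : Bool} {r : List (RLetter α)} (h : StartsDir δ r)
    (s : List (RLetter α)) : StartsDir δ (r ++ s) := by
  cases r with
  | nil => exact absurd rfl h.ne_nil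
  | cons => exact h

theorem StartsDir.of_prefix {δ : Bool} {t r : List (RLetter α)} (h : StartsDir δ r)
    (ht : t ≠ []) (htr : t <+: r) : StartsDir δ t := by
  obtain ⟨s, rfl⟩ := htr
  cases t with
  | nil => exact absurd rfl ht
  | cons => exact h

theorem startsDir_map_flip {δ : Bool} {r : List (RLetter α)} :
    StartsDir δ (r.map RLetter.flip) ↔ StartsDir (!δ) r := by
  cases r <;> simp [StartsDir, Bool.not_eq_eq_eq_not]

theorem odd_numBlocks_concat_iff {δ : Bool} {r : List (RLetter α)} {z : RLetter α}
    (h : StartsDir δ (r ++ [z])) : Odd (numBlocks (r ++ [z])) ↔ z.isX = δ := by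
  induction r using List.reverseRecOn generalizing z with
  | nil => simpa [numBlocks, StartsDir] using h
  | append_singleton r y ih =>
    have hy := ih (h.of_prefix (by simp) (List.prefix_append _ _))
    rw [numBlocks_concat_concat, sameDir_eq_beq_isX]
    generalize y.isX = εy at hy ⊢
    generalize z.isX = εz
    cases εy <;> cases εz <;> cases δ <;> simp_all [Nat.odd_add_one]

/-- The set `uR^X_{m,n}` for `δ = true` and `uR^Y_{m,n}` for `δ = false`. -/
def uRDir (δ : Bool) (m n : ℕ) (r : List (RLetter α)) : Prop :=
  (StartsDir δ r ∧ numBlocks r ≤ m ∧ r.length ≤ n) ∨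
    (StartsDir (!δ) r ∧ numBlocks r < m ∧ r.length < n)

theorem startsX_iff {r : List (RLetter α)} : startsX r ↔ StartsDir true r := by
  rcases r with - | ⟨z | z, t⟩ <;> simp [startsX, StartsDir, RLetter.isX]

theorem startsY_iff {r : List (RLetter α)} : startsY r ↔ StartsDir false r := by
  rcases r with - | ⟨z | z, t⟩ <;> simp [startsY, StartsDir, RLetter.isX]

theorem uRX_iff {m n : ℕ} {r : List (RLetter α)} : uRX m n r ↔ uRDir true m n r := by
  simp only [uRX, uRDir, RX, RY, startsX_iff, startsY_iff, Bool.not_true]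
  grind

theorem uRY_iff {m n : ℕ} {r : List (RLetter α)} : uRY m n r ↔ uRDir false m n r := by
  simp only [uRY, uRDir, RX, RY, startsX_iff, startsY_iff, Bool.not_false]
  grind

theorem uRDir_map_flip {δ : Bool} {m n : ℕ} {r : List (RLetter α)} :
    uRDir δ m n (r.map RLetter.flip) ↔ uRDir (!δ) m n r := by
  simp [uRDir, startsDir_map_flip, numBlocks_map_flip]

/-- A pair of rankers starting in opposite directions, `r` in direction `δ`, that is within the
bounds `m` on the blocks and `n` on the total depth under which positions are compared. -/
structure OpposedPair (δ : Bool) (m n : ℕ) (r r' : List (RLetter α)) : Prop where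
  starts_left : StartsDir δ r
  starts_right : StartsDir (!δ) r'
  blocks_left : numBlocks r ≤ m
  blocks_right : numBlocks r' ≤ m
  depth : r.length + r'.length ≤ n

namespace OpposedPair

variable {δ : Bool} {m n : ℕ} {r r' t : List (RLetter α)}

theorem prefix_left (h : OpposedPair δ m n r r') (ht : t ≠ []) (htr : t <+: r) :
    OpposedPair δ m n t r' where
  starts_left := h.starts_left.of_prefix ht htr
  starts_right := h.starts_right
  blocks_left := (numBlocks_le_of_prefix htr).trans h.blocks_left
  blocks_right := h.blocks_right
  depth := (Nat.add_le_add_right htr.length_le _).trans h.depth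

theorem prefix_right (h : OpposedPair δ m n r r') (ht : t ≠ []) (htr : t <+: r') :
    OpposedPair δ m n r t where
  starts_left := h.starts_left
  starts_right := h.starts_right.of_prefix ht htr
  blocks_left := h.blocks_left
  blocks_right := (numBlocks_le_of_prefix htr).trans h.blocks_right
  depth := (Nat.add_le_add_left htr.length_le _).trans h.depth

theorem concat_left {z : RLetter α} (h : OpposedPair δ m n r r') (ht : t ≠ [])
    (htr : t <+: r') (hlen : t.length < r'.length) (hz : numBlocks (r ++ [z]) ≤ m) :
    OpposedPair δ m n (r ++ [z]) t where
  starts_left := h.starts_left.append _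
  starts_right := h.starts_right.of_prefix ht htr
  blocks_left := hz
  blocks_right := (numBlocks_le_of_prefix htr).trans h.blocks_right
  depth := by
    have := h.depth
    simp only [List.length_append, List.length_singleton]
    omega

theorem map_flip (h : OpposedPair δ m n r r') :
    OpposedPair (!δ) m n (r.map RLetter.flip) (r'.map RLetter.flip) where
  starts_left := by simpa [startsDir_map_flip] using h.starts_left
  starts_right := by simpa [startsDir_map_flip] using h.starts_right
  blocks_left := by simpa [numBlocks_map_flip] using h.blocks_left
  blocks_right := by simpa [numBlocks_map_flip] using h.blocks_right
  depth := by simpa using h.depth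

theorem uRDir_concat_left (h : OpposedPair δ m n r r') (z : RLetter α) :
    uRDir δ (m + 1) n (r ++ [z]) := by
  refine Or.inl ⟨h.starts_left.append _, ?_, ?_⟩
  · exact (numBlocks_concat_le r z).trans (Nat.add_le_add_right h.blocks_left 1)
  · have := h.depth
    have := List.length_pos_of_ne_nil h.starts_right.ne_nil
    simp only [List.length_append, List.length_singleton]
    omega

/-- A further letter `Y` exceeds the bound on the blocks only by opening a new one. -/
theorem exists_concat_X_of_lt {d : α} (h : OpposedPair δ m n r r')
    (hlt : m < numBlocks (r ++ [.Y d])) : ∃ s c, r = s ++ [.X c] ∧ numBlocks r = m := by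
  obtain ⟨s, z, rfl⟩ := r.eq_nil_or_concat'.resolve_left h.starts_left.ne_nil
  have hle := h.blocks_left
  rw [numBlocks_concat_concat] at hlt
  cases z with
  | X c => exact ⟨s, c, rfl, by split_ifs at hlt <;> omega⟩
  | Y c => exact absurd hlt (by simpa [sameDir] using hle)

/-- The two rankers start in opposite directions and end in the same one, so their numbers of
blocks have different parities and `r'` has a block to spare. -/
theorem uRDir_concat_right {c d : α} (h : OpposedPair δ m n (r ++ [.X c]) (r' ++ [.X d]))
    (hblocks : numBlocks (r ++ [.X c]) = m) :
    uRDir δ (m + 1) n (r' ++ [.X d] ++ [.Y c]) := by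
  have hodd := odd_numBlocks_concat_iff h.starts_left
  have hodd' := odd_numBlocks_concat_iff h.starts_right
  have hfewer : numBlocks (r' ++ [.X d]) < numBlocks (r ++ [.X c]) := by
    refine lt_of_le_of_ne (h.blocks_right.trans hblocks.ge) fun heq => ?_
    have := hodd.symm.trans (heq ▸ hodd')
    cases δ <;> simp [RLetter.isX] at this
  have hr : r ≠ [] := by
    rintro rfl
    have := numBlocks_pos h.starts_right.ne_nil
    simp only [List.nil_append, numBlocks] at hfewer
    omega
  have hdepth := h.depth
  have hpos := List.length_pos_of_ne_nil hr
  have hle := numBlocks_concat_le (r' ++ [.X d]) (.Y c)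
  simp only [List.length_append, List.length_singleton] at hdepth
  refine Or.inr ⟨h.starts_right.append _, by omega, ?_⟩
  simp only [List.length_append, List.length_singleton]
  omega

end OpposedPair

end Blocks

/-- A word, seen as a linear order of positions with labels in `α`, to be read strictly between
the two endpoints `bot` and `top`. Unlike `List α`, this notion is closed under order duality,
which exchanges the `X`- and the `Y`-letters of rankers. -/
structure LabelledOrder (P α : Type*) where
  label : P → Option α
  bot : P
  top : P

namespace LabelledOrder

open OrderDual

section Trace

variable {P α : Type*} [LinearOrder P] {W : LabelledOrder P α} {r t : List (RLetter α)}
  {z : RLetter α} {a : α} {I J : P × P} {p q : P}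

/-- The `a`-positions inside the open interval `I`. -/
def occ (W : LabelledOrder P α) (a : α) (I : P × P) : Set P :=
  {x | I.1 < x ∧ x < I.2 ∧ W.label x = some a}

/-- Reading the letter `z` inside the open interval `I` leads to the position `p` of `I`. -/
def Hit (W : LabelledOrder P α) : RLetter α → P × P → P → Prop
  | .X a, I, p => IsLeast (W.occ a I) p
  | .Y a, I, p => IsGreatest (W.occ a I) p

/-- The part of the interval `I` in which the letter `z` is searched from the position `q`. -/
def narrow : RLetter α → P × P → P → P × P
  | .X _, I, q => (q, I.2)
  | .Y _, I, q => (I.1, q)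

/-- `r` is condensed on `W`, its last letter is searched in the interval `I`, and it leads to the
position `p`. -/
inductive Trace (W : LabelledOrder P α) : List (RLetter α) → P × P → P → Prop
  | single {z : RLetter α} {p : P} : W.Hit z (W.bot, W.top) p → Trace W [z] (W.bot, W.top) p
  | concat {r : List (RLetter α)} {z : RLetter α} {I : P × P} {q p : P} :
      Trace W r I q → W.Hit z (narrow z I q) p → Trace W (r ++ [z]) (narrow z I q) p

/-- `r` is condensed on `W` and leads to the position `p`. -/
def Visits (W : LabelledOrder P α) (r : List (RLetter α)) (p : P) : Prop :=
  ∃ I, W.Trace r I p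

/-- The analogue of `Condensed` for labelled orders. -/
def Condenses (W : LabelledOrder P α) (r : List (RLetter α)) : Prop :=
  ∃ p, W.Visits r p

theorem Hit.mem_occ (h : W.Hit z I p) : ∃ a, p ∈ W.occ a I := by
  cases z <;> exact ⟨_, h.1⟩

theorem Hit.left_lt (h : W.Hit z I p) : I.1 < p :=
  let ⟨_, hp⟩ := h.mem_occ; hp.1

theorem Hit.lt_right (h : W.Hit z I p) : p < I.2 :=
  let ⟨_, hp⟩ := h.mem_occ; hp.2.1

theorem Hit.unique (hp : W.Hit z I p) (hq : W.Hit z I q) : p = q := by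
  cases z
  · exact IsLeast.unique hp hq
  · exact IsGreatest.unique hp hq

theorem trace_concat_iff :
    W.Trace (r ++ [z]) J p ↔ W.Hit z J p ∧
      ((r = [] ∧ J = (W.bot, W.top)) ∨ ∃ I q, W.Trace r I q ∧ J = narrow z I q) := by
  constructor
  · intro h
    generalize hs : r ++ [z] = s at h
    cases h with
    | single h =>
      obtain ⟨rfl, hz⟩ := List.append_inj' (hs.trans (List.nil_append _).symm) rfl
      exact ⟨List.singleton_inj.1 hz ▸ h, Or.inl ⟨rfl, rfl⟩⟩
    | concat ht h =>
      obtain ⟨rfl, hz⟩ := List.append_inj' hs rfl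
      obtain rfl := List.singleton_inj.1 hz
      exact ⟨h, Or.inr ⟨_, _, ht, rfl⟩⟩
  · rintro ⟨h, ⟨rfl, rfl⟩ | ⟨I, q, ht, rfl⟩⟩
    · exact .single h
    · exact .concat ht h

theorem Trace.ne_nil (h : W.Trace r I p) : r ≠ [] := by
  cases h <;> simp

theorem Trace.left_lt (h : W.Trace r I p) : I.1 < p := by
  cases h with
  | single h | concat _ h => exact h.left_lt

theorem Trace.bot_le_left (h : W.Trace r I p) : W.bot ≤ I.1 := by
  induction h with
  | single => exact le_rfl
  | @concat r z I q p hr _ ih =>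
    cases z
    · exact ih.trans hr.left_lt.le
    · exact ih

theorem Visits.ne_nil (h : W.Visits r p) : r ≠ [] :=
  let ⟨_, h⟩ := h; h.ne_nil

theorem Visits.bot_lt (h : W.Visits r p) : W.bot < p :=
  let ⟨_, h⟩ := h; h.bot_le_left.trans_lt h.left_lt

theorem Trace.unique (h : W.Trace r I p) (h' : W.Trace r J q) : I = J ∧ p = q := by
  induction h generalizing J q with
  | single hz =>
    obtain ⟨hz', ⟨-, rfl⟩ | ⟨_, _, hnil, -⟩⟩ := trace_concat_iff (r := []).1 h'
    · exact ⟨rfl, hz.unique hz'⟩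
    · exact absurd rfl hnil.ne_nil
  | concat hr hz ih =>
    obtain ⟨hz', ⟨rfl, -⟩ | ⟨_, _, hr', rfl⟩⟩ := trace_concat_iff.1 h'
    · exact absurd rfl hr.ne_nil
    · obtain ⟨rfl, rfl⟩ := ih hr'
      exact ⟨rfl, hz.unique hz'⟩

theorem Trace.visits_concat_iff (h : W.Trace r I q) :
    W.Visits (r ++ [z]) p ↔ W.Hit z (narrow z I q) p := by
  refine ⟨?_, fun hz => ⟨_, h.concat hz⟩⟩
  rintro ⟨J, hJ⟩
  obtain ⟨hz, ⟨rfl, -⟩ | ⟨I', q', h', rfl⟩⟩ := trace_concat_iff.1 hJ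
  · exact absurd rfl h.ne_nil
  · obtain ⟨rfl, rfl⟩ := h.unique h'
    exact hz

theorem exists_isGreatest_occ [LocallyFiniteOrder P] (hq : q ∈ W.occ a I) :
    ∃ p, IsGreatest (W.occ a I) p := by
  have hfin : (W.occ a I).Finite :=
    (Set.finite_Ioo I.1 I.2).subset fun x hx => ⟨hx.1, hx.2.1⟩
  obtain ⟨p, hp⟩ := hfin.exists_maximal ⟨q, hq⟩
  exact ⟨p, hp.prop, fun x hx => le_of_not_gt fun hlt => hp.not_gt hx hlt⟩

theorem Trace.condenses_concat_Y_iff [LocallyFiniteOrder P] (h : W.Trace r I q) :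
    W.Condenses (r ++ [.Y a]) ↔ (W.occ a (I.1, q)).Nonempty := by
  simp only [Condenses, h.visits_concat_iff]
  exact ⟨fun ⟨p, hp⟩ => ⟨p, hp.1⟩, fun ⟨_, hp⟩ => exists_isGreatest_occ hp⟩

theorem le_of_isLeast_occ (hp : IsLeast (W.occ a I) p) (hq : W.label q = some a)
    (hlt : I.1 < q) : p ≤ q := by
  obtain hq2 | hq2 := lt_or_ge q I.2
  · exact hp.2 ⟨hlt, hq2, hq⟩
  · exact (hp.1.2.1.trans_le hq2).le

theorem Trace.left_endpoint {Q : Type*} [LinearOrder Q] {V : LabelledOrder Q α} {K : Q × Q}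
    {k : Q} (hW : W.Trace r I p) (hV : V.Trace r K k) :
    (I.1 = W.bot ∧ K.1 = V.bot) ∨
      ∃ t, t <+: r ∧ t.length < r.length ∧ W.Visits t I.1 ∧ V.Visits t K.1 := by
  induction hW generalizing K k with
  | single =>
    obtain ⟨-, ⟨-, rfl⟩ | ⟨_, _, hnil, -⟩⟩ := trace_concat_iff (r := []).1 hV
    · exact Or.inl ⟨rfl, rfl⟩
    · exact absurd rfl hnil.ne_nil
  | @concat r z I q p hr _ ih =>
    obtain ⟨-, ⟨rfl, -⟩ | ⟨K', k', hr', rfl⟩⟩ := trace_concat_iff.1 hV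
    · exact absurd rfl hr.ne_nil
    have hlen : r.length < (r ++ [z]).length := by simp
    cases z with
    | X _ => exact Or.inr ⟨r, List.prefix_append _ _, hlen, ⟨_, hr⟩, ⟨_, hr'⟩⟩
    | Y _ =>
      refine (ih hr').imp_right ?_
      rintro ⟨t, htr, ht, hI, hK⟩
      exact ⟨t, htr.trans (List.prefix_append _ _), ht.trans hlen, hI, hK⟩

end Trace

section Dual

variable {P α : Type*} {W : LabelledOrder P α} {r : List (RLetter α)}
  {z : RLetter α} {a : α} {I : P × P} {p q : P}

/-- The word read from right to left. -/
def dual (W : LabelledOrder P α) : LabelledOrder Pᵒᵈ α where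
  label x := W.label (ofDual x)
  bot := toDual W.top
  top := toDual W.bot

/-- The interval `I` in the dual order. -/
def dualInterval (I : P × P) : Pᵒᵈ × Pᵒᵈ :=
  (toDual I.2, toDual I.1)

theorem narrow_flip : narrow z.flip (dualInterval I) (toDual q) = dualInterval (narrow z I q) := by
  cases z <;> rfl

variable [LinearOrder P]

theorem occ_dual : W.dual.occ a (dualInterval I) = ofDual ⁻¹' W.occ a I := by
  ext x
  exact and_left_comm

theorem Hit.dual (h : W.Hit z I p) : W.dual.Hit z.flip (dualInterval I) (toDual p) := by
  cases z with
  | X a =>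
    rw [RLetter.flip, Hit, occ_dual]
    exact IsLeast.dual h
  | Y a =>
    rw [RLetter.flip, Hit, occ_dual]
    exact IsGreatest.dual h

theorem Trace.dual (h : W.Trace r I p) :
    W.dual.Trace (r.map RLetter.flip) (dualInterval I) (toDual p) := by
  induction h with
  | single h => exact .single h.dual
  | concat _ hz ih =>
    rw [List.map_append, ← narrow_flip]
    exact ih.concat (narrow_flip ▸ hz.dual)

theorem visits_dual_iff : W.dual.Visits (r.map RLetter.flip) (toDual p) ↔ W.Visits r p := by
  refine ⟨fun ⟨I, h⟩ => ?_, fun ⟨I, h⟩ => ⟨_, h.dual⟩⟩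
  have := h.dual
  rw [map_flip_map_flip] at this
  exact ⟨_, this⟩

theorem condenses_dual_iff : W.dual.Condenses (r.map RLetter.flip) ↔ W.Condenses r :=
  exists_congr fun _ => visits_dual_iff

end Dual

section Comparison

variable {P Q α : Type*} [LinearOrder P] [LinearOrder Q] {W : LabelledOrder P α}
  {V : LabelledOrder Q α} {δ : Bool} {m n : ℕ} {r r' : List (RLetter α)} {c d : α}
  {I I' : P × P} {p p' : P} {K K' : Q × Q} {q q' : Q}

/-- The relation `⊳_{m+1,n}` for `δ = true` and `⊲_{m+1,n}` for `δ = false`. -/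
def Agree (δ : Bool) (m n : ℕ) (W : LabelledOrder P α) (V : LabelledOrder Q α) : Prop :=
  ∀ r, uRDir δ (m + 1) n r → (W.Condenses r ↔ V.Condenses r)

/-- The positions of `r` and `r'` are ordered in `W` in the same way as in `V`. -/
def SameOrder (W : LabelledOrder P α) (V : LabelledOrder Q α) (r r' : List (RLetter α)) : Prop :=
  ∀ ⦃p p' q q'⦄, W.Visits r p → W.Visits r' p' → V.Visits r q → V.Visits r' q' →
    (p < p' ↔ q < q') ∧ (p' < p ↔ q' < q)

theorem Agree.symm (h : Agree δ m n W V) : Agree δ m n V W :=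
  fun r hr => (h r hr).symm

theorem Agree.dual (h : Agree δ m n W V) : Agree (!δ) m n W.dual V.dual := by
  intro r hr
  have := h (r.map RLetter.flip) (uRDir_map_flip.2 hr)
  rwa [← condenses_dual_iff, ← condenses_dual_iff (W := V), map_flip_map_flip] at this

theorem SameOrder.symm (h : SameOrder W V r r') : SameOrder V W r r' :=
  fun _ _ _ _ hq hq' hp hp' => (h hp hp' hq hq').imp Iff.symm Iff.symm

theorem SameOrder.swap (h : SameOrder W V r r') : SameOrder W V r' r :=
  fun _ _ _ _ hp' hp hq' hq => (h hp hp' hq hq').symm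

theorem sameOrder_dual_iff :
    SameOrder W.dual V.dual (r.map RLetter.flip) (r'.map RLetter.flip) ↔ SameOrder W V r r' := by
  constructor <;> intro h p p' q q' hp hp' hq hq'
  · exact (h (visits_dual_iff.2 hp) (visits_dual_iff.2 hp') (visits_dual_iff.2 hq)
      (visits_dual_iff.2 hq')).symm
  · exact (h (visits_dual_iff.1 hp) (visits_dual_iff.1 hp') (visits_dual_iff.1 hq)
      (visits_dual_iff.1 hq')).symm

theorem Trace.left_lt_iff (hp : W.Trace r I p) (hq : V.Trace r K q) (hp' : W.Visits r' p')
    (hq' : V.Visits r' q')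
    (h : ∀ t, t ≠ [] → t <+: r → t.length < r.length → SameOrder W V t r') :
    I.1 < p' ↔ K.1 < q' := by
  obtain ⟨hI, hK⟩ | ⟨t, htr, hlen, hI, hK⟩ := hp.left_endpoint hq
  · rw [hI, hK]
    exact iff_of_true hp'.bot_lt hq'.bot_lt
  · exact (h t hI.ne_nil htr hlen hI hp' hK hq').1

theorem Trace.left_lt_left_iff (hp : W.Trace r I p) (hq : V.Trace r K q)
    (hp' : W.Trace r' I' p') (hq' : V.Trace r' K' q')
    (h : ∀ t t', t ≠ [] → t <+: r → t.length < r.length →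
      t' ≠ [] → t' <+: r' → t'.length < r'.length → SameOrder W V t t') :
    I.1 < I'.1 ↔ K.1 < K'.1 := by
  obtain ⟨hI, hK⟩ | ⟨t', htr, hlen, hI, hK⟩ := hp'.left_endpoint hq'
  · rw [hI, hK]
    exact iff_of_false hp.bot_le_left.not_gt hq.bot_le_left.not_gt
  · exact hp.left_lt_iff hq hI hK fun t h0 h1 h2 => h t t' h0 h1 h2 hI.ne_nil htr hlen

/-- The induction hypothesis for the comparison of the positions of `r` and `r'`. The weight of
`r'` makes room for extending `r` by one letter while shortening `r'`. -/
def SameOrderBelow (δ : Bool) (m n : ℕ) (W : LabelledOrder P α) (V : LabelledOrder Q α)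
    (r r' : List (RLetter α)) : Prop :=
  ∀ t t', OpposedPair δ m n t t' → t.length + 2 * t'.length < r.length + 2 * r'.length →
    SameOrder W V t t'

theorem SameOrderBelow.symm (h : SameOrderBelow δ m n W V r r') :
    SameOrderBelow δ m n V W r r' :=
  fun t t' ht hlt => (h t t' ht hlt).symm

theorem SameOrderBelow.dual (h : SameOrderBelow δ m n W V r r') :
    SameOrderBelow (!δ) m n W.dual V.dual (r.map RLetter.flip) (r'.map RLetter.flip) := by
  intro t t' ht hlt
  have := h _ _ (by simpa using ht.map_flip) (by simpa using hlt)
  rwa [← sameOrder_dual_iff, map_flip_map_flip, map_flip_map_flip] at this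

theorem left_lt_iff_of_below (h : OpposedPair δ m n r r') (ih : SameOrderBelow δ m n W V r r')
    (hp : W.Trace r I p) (hq : V.Trace r K q) (hp' : W.Visits r' p') (hq' : V.Visits r' q') :
    I.1 < p' ↔ K.1 < q' :=
  hp.left_lt_iff hq hp' hq' fun t h0 h1 h2 => ih t r' (h.prefix_left h0 h1) (by omega)

theorem left_lt_iff_of_below_right (h : OpposedPair δ m n r r')
    (ih : SameOrderBelow δ m n W V r r') (hp' : W.Trace r' I' p') (hq' : V.Trace r' K' q')
    (hp : W.Visits r p) (hq : V.Visits r q) :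
    I'.1 < p ↔ K'.1 < q :=
  hp'.left_lt_iff hq' hp hq fun t h0 h1 h2 => (ih r t (h.prefix_right h0 h1) (by omega)).swap

theorem Trace.isLeast_of_concat_X (h : W.Trace (r ++ [.X d]) I p) : IsLeast (W.occ d I) p :=
  (trace_concat_iff.1 h).1

theorem Trace.label_eq (hp : W.Trace r I p) (hq : V.Trace r K q) : W.label p = V.label q := by
  obtain ⟨r, z, rfl⟩ := r.eq_nil_or_concat'.resolve_left hp.ne_nil
  have hp := (trace_concat_iff.1 hp).1
  have hq := (trace_concat_iff.1 hq).1
  cases z <;> exact hp.1.2.2.trans hq.1.2.2.symm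

theorem le_of_eq_of_below (h : OpposedPair δ m n r (r' ++ [.X d]))
    (ih : SameOrderBelow δ m n W V r (r' ++ [.X d])) (hp : W.Trace r I p)
    (hp' : W.Trace (r' ++ [.X d]) I' p) (hq : V.Trace r K q)
    (hq' : V.Trace (r' ++ [.X d]) K' q') : q' ≤ q := by
  have hlabel : V.label q = some d := (hp.label_eq hq).symm.trans hp'.isLeast_of_concat_X.1.2.2
  have hKq : K'.1 < q := (left_lt_iff_of_below_right h ih hp' hq' ⟨_, hp⟩ ⟨_, hq⟩).1 hp'.left_lt
  exact le_of_isLeast_occ hq'.isLeast_of_concat_X hlabel hKq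

variable [LocallyFiniteOrder P] [LocallyFiniteOrder Q]

theorem Agree.nonempty_occ_iff (hagree : Agree δ m n W V) (hp : W.Trace r I p)
    (hq : V.Trace r K q) (hr : uRDir δ (m + 1) n (r ++ [.Y d])) :
    (W.occ d (I.1, p)).Nonempty ↔ (V.occ d (K.1, q)).Nonempty := by
  rw [← hp.condenses_concat_Y_iff, ← hq.condenses_concat_Y_iff]
  exact hagree _ hr

theorem lt_of_lt_of_numBlocks_eq (h : OpposedPair δ m n (r ++ [.X c]) (r' ++ [.X d]))
    (hagree : Agree δ m n W V) (ih : SameOrderBelow δ m n W V (r ++ [.X c]) (r' ++ [.X d]))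
    (hblocks : numBlocks (r ++ [.X c]) = m) (hp : W.Trace (r ++ [.X c]) I p)
    (hp' : W.Trace (r' ++ [.X d]) I' p') (hq : V.Trace (r ++ [.X c]) K q)
    (hq' : V.Trace (r' ++ [.X d]) K' q') (hleft : I.1 < I'.1) (hlt : p' < p) : q' < q := by
  have hfirst : ∀ x, I'.1 < x → x ≤ p' → W.label x ≠ some c := fun x hx hxp hc =>
    (hxp.trans_lt hlt).not_ge (le_of_isLeast_occ hp.isLeast_of_concat_X hc (hleft.trans hx))
  have hKq : K'.1 < q :=
    (left_lt_iff_of_below_right h ih hp' hq' ⟨_, hp⟩ ⟨_, hq⟩).1 (hp'.left_lt.trans hlt)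
  have hqc : V.label q = some c := hq.isLeast_of_concat_X.1.2.2
  by_contra! hle
  obtain rfl | hqq := hle.eq_or_lt
  · exact hfirst p' hp'.left_lt le_rfl ((hp'.label_eq hq').trans hqc)
  · obtain ⟨x, hx, hxp, hxc⟩ :=
      (hagree.nonempty_occ_iff hp' hq' (h.uRDir_concat_right hblocks)).2 ⟨q, hKq, hqq, hqc⟩
    exact hfirst x hx hxp.le hxc

theorem lt_of_lt_of_numBlocks_concat_le (h : OpposedPair δ m n r (r' ++ [.X d]))
    (ih : SameOrderBelow δ m n W V r (r' ++ [.X d])) (hblocks : numBlocks (r ++ [.Y d]) ≤ m)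
    (hp : W.Trace r I p) (hp' : W.Trace (r' ++ [.X d]) I' p') (hq : V.Trace r K q)
    (hq' : V.Trace (r' ++ [.X d]) K' q') (hleft : I.1 < p') (hlt : p' < p)
    (hne : (V.occ d (K.1, q)).Nonempty) : q' < q := by
  have hp'occ : p' ∈ W.occ d (I.1, p) := ⟨hleft, hlt, hp'.isLeast_of_concat_X.1.2.2⟩
  obtain ⟨x, hx⟩ := exists_isGreatest_occ hp'occ
  obtain ⟨y, hy⟩ := exists_isGreatest_occ hne.some_mem
  have hpx : p' ≤ x := hx.2 hp'occ
  have hxv : W.Visits (r ++ [.Y d]) x := hp.visits_concat_iff.2 hx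
  have hyv : V.Visits (r ++ [.Y d]) y := hq.visits_concat_iff.2 hy
  have hiff : I'.1 < x ↔ K'.1 < y := by
    refine hp'.left_lt_iff hq' hxv hyv fun t h0 h1 h2 => (ih _ t ?_ ?_).swap
    · exact h.concat_left h0 h1 h2 hblocks
    · simp only [List.length_append, List.length_singleton] at h2 ⊢
      omega
  have hKy := hiff.1 (hp'.left_lt.trans_le hpx)
  exact (le_of_isLeast_occ hq'.isLeast_of_concat_X hy.1.2.2 hKy).trans_lt hy.1.2.1

theorem lt_of_lt_of_below (h : OpposedPair δ m n r (r' ++ [.X d])) (hagree : Agree δ m n W V)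
    (ih : SameOrderBelow δ m n W V r (r' ++ [.X d])) (hp : W.Trace r I p)
    (hp' : W.Trace (r' ++ [.X d]) I' p') (hq : V.Trace r K q)
    (hq' : V.Trace (r' ++ [.X d]) K' q') (hlt : p' < p) : q' < q := by
  have hright := left_lt_iff_of_below h ih hp hq ⟨_, hp'⟩ ⟨_, hq'⟩
  obtain hpI | hIp := le_or_gt p' I.1
  · exact (le_of_not_gt fun hKq => hpI.not_gt (hright.2 hKq)).trans_lt hq.left_lt
  have hne : (V.occ d (K.1, q)).Nonempty :=
    (hagree.nonempty_occ_iff hp hq (h.uRDir_concat_left (.Y d))).1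
      ⟨p', hIp, hlt, hp'.isLeast_of_concat_X.1.2.2⟩
  obtain hblocks | hblocks := le_or_gt (numBlocks (r ++ [.Y d])) m
  · exact lt_of_lt_of_numBlocks_concat_le h ih hblocks hp hp' hq hq' hIp hlt hne
  obtain ⟨s, c, rfl, hm⟩ := h.exists_concat_X_of_lt hblocks
  obtain hII | hII := lt_or_ge I.1 I'.1
  · exact lt_of_lt_of_numBlocks_eq h hagree ih hm hp hp' hq hq' hII hlt
  · have hKK : K'.1 ≤ K.1 := by
      refine le_of_not_gt fun hKK => hII.not_gt ((hp.left_lt_left_iff hq hp' hq' ?_).2 hKK)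
      exact fun t t' h0 h1 h2 h3 h4 h5 =>
        ih t t' ((h.prefix_left h0 h1).prefix_right h3 h4) (by omega)
    obtain ⟨y, hKy, hyq, hyd⟩ := hne
    exact (le_of_isLeast_occ hq'.isLeast_of_concat_X hyd (hKK.trans_lt hKy)).trans_lt hyq

theorem sameOrder_concat_X_of_below (h : OpposedPair δ m n r (r' ++ [.X d]))
    (hagree : Agree δ m n W V) (ih : SameOrderBelow δ m n W V r (r' ++ [.X d])) :
    SameOrder W V r (r' ++ [.X d]) := by
  rintro p p' q q' ⟨I, hp⟩ ⟨I', hp'⟩ ⟨K, hq⟩ ⟨K', hq'⟩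
  have hlt : p' < p ↔ q' < q :=
    ⟨lt_of_lt_of_below h hagree ih hp hp' hq hq',
      lt_of_lt_of_below h hagree.symm ih.symm hq hq' hp hp'⟩
  have hle : p' ≤ p ↔ q' ≤ q := by
    constructor <;> intro hle <;> obtain rfl | hlt' := hle.eq_or_lt
    · exact le_of_eq_of_below h ih hp hp' hq hq'
    · exact (hlt.1 hlt').le
    · exact le_of_eq_of_below h ih.symm hq hq' hp hp'
    · exact (hlt.2 hlt').le
  exact ⟨by simpa using hle.not, hlt⟩

theorem sameOrder_of_below (h : OpposedPair δ m n r r') (hagree : Agree δ m n W V)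
    (ih : SameOrderBelow δ m n W V r r') : SameOrder W V r r' := by
  obtain ⟨s', z, rfl⟩ := r'.eq_nil_or_concat'.resolve_left h.starts_right.ne_nil
  cases z with
  | X d => exact sameOrder_concat_X_of_below h hagree ih
  | Y d =>
    rw [← sameOrder_dual_iff]
    have hdual := h.map_flip
    have ih_dual := ih.dual
    rw [List.map_append] at hdual ih_dual ⊢
    exact sameOrder_concat_X_of_below hdual hagree.dual ih_dual

theorem sameOrder_of_agree (hagree : Agree δ m n W V) (h : OpposedPair δ m n r r') :
    SameOrder W V r r' := by
  induction hN : r.length + 2 * r'.length using Nat.strong_induction_on generalizing r r' with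
  | _ N ih =>
    refine sameOrder_of_below h hagree fun t t' ht hlt => ?_
    exact ih _ (hN ▸ hlt) ht rfl

end Comparison

section WindowChain

variable {P α : Type*} [LinearOrder P] {W : LabelledOrder P α} {r : List (RLetter α)}
  {y z : RLetter α} {I : ℕ → P × P} {J : P × P} {p : P}

/-- The intervals `I 0, I 1, …` are those in which the successive letters of `r` are searched,
where every letter of `r` but the last is required to be found. -/
structure IsWindowChain (W : LabelledOrder P α) (r : List (RLetter α)) (I : ℕ → P × P) : Prop where
  zero : I 0 = (W.bot, W.top)
  succ : ∀ k y z, r[k]? = some y → r[k + 1]? = some z →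
    ∃ q, W.Hit y (I k) q ∧ I (k + 1) = narrow z (I k) q

theorem IsWindowChain.congr {I' : ℕ → P × P} (h : IsWindowChain W r I) (hr : r ≠ [])
    (heq : ∀ k < r.length, I' k = I k) : IsWindowChain W r I' where
  zero := (heq 0 (List.length_pos_of_ne_nil hr)).trans h.zero
  succ k y z hy hz := by
    have hk := (List.getElem?_eq_some_iff.1 hz).1
    rw [heq k (by omega), heq (k + 1) hk]
    exact h.succ k y z hy hz

theorem isWindowChain_singleton_iff : IsWindowChain W [z] I ↔ I 0 = (W.bot, W.top) :=
  ⟨fun h => h.zero, fun h => ⟨h, by simp⟩⟩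

theorem isWindowChain_concat_concat_iff :
    IsWindowChain W (r ++ [y] ++ [z]) I ↔ IsWindowChain W (r ++ [y]) I ∧
      ∃ q, W.Hit y (I r.length) q ∧ I (r.length + 1) = narrow z (I r.length) q := by
  constructor
  · intro h
    refine ⟨⟨h.zero, fun k y' z' hy hz => h.succ k y' z' ?_ ?_⟩,
      h.succ r.length y z (by simp) (by simp)⟩ <;> grind
  · rintro ⟨h, hlast⟩
    refine ⟨h.zero, fun k y' z' hy hz => ?_⟩
    have hk := (List.getElem?_eq_some_iff.1 hz).1
    simp only [List.length_append, List.length_singleton] at hk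
    obtain hk | rfl : k < r.length ∨ k = r.length := by omega
    · exact h.succ k y' z' (by grind) (by grind)
    · obtain rfl : y = y' := by simpa using hy
      obtain rfl : z = z' := by simpa using hz
      exact hlast

theorem trace_concat_iff_isWindowChain :
    W.Trace (r ++ [z]) J p ↔
      W.Hit z J p ∧ ∃ I, IsWindowChain W (r ++ [z]) I ∧ I r.length = J := by
  rw [trace_concat_iff]
  refine and_congr_right fun _ => ?_
  induction r using List.reverseRecOn generalizing z J p with
  | nil =>
    simp only [List.nil_append, isWindowChain_singleton_iff, List.length_nil, true_and]
    constructor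
    · rintro (rfl | ⟨_, _, h, -⟩)
      · exact ⟨fun _ => _, rfl, rfl⟩
      · exact absurd rfl h.ne_nil
    · rintro ⟨I, hI, rfl⟩
      exact Or.inl hI
  | append_singleton r y ih =>
    simp only [List.append_eq_nil_iff, List.cons_ne_self, and_false, false_and, false_or,
      isWindowChain_concat_concat_iff, trace_concat_iff (z := y), List.length_append,
      List.length_singleton]
    constructor
    · rintro ⟨I, q, ⟨hq, hI⟩, rfl⟩
      obtain ⟨c, hc, rfl⟩ := (ih hq).1 hI
      refine ⟨Function.update c (r.length + 1) (narrow z (c r.length) q), ⟨?_, q, ?_⟩, ?_⟩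
      · refine hc.congr (by simp) fun k hk => Function.update_of_ne ?_ _ _
        simpa using hk.ne
      · simp [hq]
      · simp
    · rintro ⟨c, ⟨hc, q, hq, hlast⟩, rfl⟩
      exact ⟨c r.length, q, ⟨hq, (ih hq).2 ⟨c, hc, rfl⟩⟩, hlast⟩

end WindowChain

end LabelledOrder

section Words

open LabelledOrder

/-- The word `u` as a labelled order on `ℕ`, with positions counted from `1`. The label of `0` is
junk, which is harmless as `0` is the left endpoint. -/
def ofWord {α : Type*} (u : List α) : LabelledOrder ℕ α where
  label k := u[k - 1]?
  bot := 0
  top := u.length + 1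

/-- The end of the interval `I` from which the letter `z` is searched. -/
def searchStart {α : Type*} : RLetter α → ℕ × ℕ → ℕ
  | .X _, I => I.1
  | .Y _, I => I.2

theorem searchStart_narrow {α : Type*} {z : RLetter α} {I : ℕ × ℕ} {q : ℕ} :
    searchStart z (narrow z I q) = q := by
  cases z <;> rfl

theorem getLast?_eq_some_iff_isGreatest {P : Type*} [LinearOrder P] {l : List P}
    (h : l.Pairwise (· < ·)) {p : P} : l.getLast? = some p ↔ IsGreatest {x | x ∈ l} p := by
  obtain rfl | ⟨l, x, rfl⟩ := l.eq_nil_or_concat'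
  · simp [IsGreatest]
  have hx : IsGreatest {y | y ∈ l ++ [x]} x := by
    refine ⟨by simp, fun y hy => ?_⟩
    obtain hy | rfl : y ∈ l ∨ y = x := by simpa using hy
    · exact ((List.pairwise_append.1 h).2.2 y hy x (by simp)).le
    · exact le_rfl
  rw [List.getLast?_concat, Option.some_inj]
  exact ⟨fun h => h ▸ hx, hx.unique⟩

variable {u v : List A} {a : A} {r : List (RLetter A)} {z : RLetter A} {I : ℕ × ℕ} {p q : ℕ}

theorem nextOcc_eq_some_iff : nextOcc u a q = some p ↔
    q < p ∧ u[p - 1]? = some a ∧ ∀ k, q < k → k < p → u[k - 1]? ≠ some a := by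
  simp only [nextOcc, List.head?_filter, List.find?_range_eq_some, decide_eq_true_eq,
    List.mem_range, Bool.not_eq_true', decide_eq_false_iff_not, not_and]
  constructor
  · rintro ⟨⟨hqp, hp⟩, -, hmin⟩
    exact ⟨hqp, hp, fun k hqk hkp => hmin k hkp hqk⟩
  · rintro ⟨hqp, hp, hmin⟩
    have := (List.getElem?_eq_some_iff.1 hp).1
    exact ⟨⟨hqp, hp⟩, by omega, fun k hkp hqk => hmin k hqk hkp⟩

theorem prevOcc_eq_some_iff : prevOcc u a q = some p ↔
    1 ≤ p ∧ p < q ∧ u[p - 1]? = some a ∧ ∀ k, p < k → k < q → u[k - 1]? ≠ some a := by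
  rw [prevOcc, getLast?_eq_some_iff_isGreatest (List.pairwise_lt_range.filter _)]
  simp only [IsGreatest, upperBounds, Set.mem_ofPred_eq, List.mem_filter, List.mem_range,
    decide_eq_true_eq]
  have hbound : ∀ k, u[k - 1]? = some a → k < u.length + 2 := fun k hk => by
    have := (List.getElem?_eq_some_iff.1 hk).1
    omega
  constructor
  · rintro ⟨⟨-, hp, hpq, hpa⟩, hmax⟩
    refine ⟨hp, hpq, hpa, fun k hpk hkq hk => hpk.not_ge ?_⟩
    exact hmax ⟨hbound k hk, by omega, hkq, hk⟩
  · rintro ⟨hp, hpq, hpa, hmax⟩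
    refine ⟨⟨hbound p hpa, hp, hpq, hpa⟩, fun k ⟨_, _, hkq, hk⟩ => ?_⟩
    exact le_of_not_gt fun hpk => hmax k hpk hkq hk

theorem hit_ofWord_iff :
    (ofWord u).Hit z I p ↔ stepR u z (searchStart z I) = some p ∧ I.1 < p ∧ p < I.2 := by
  cases z with
  | X a =>
    simp only [Hit, stepR, searchStart, nextOcc_eq_some_iff, IsLeast, occ, ofWord, lowerBounds,
      Set.mem_ofPred_eq]
    grind
  | Y a =>
    simp only [Hit, stepR, searchStart, prevOcc_eq_some_iff, IsGreatest, occ, ofWord, upperBounds,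
      Set.mem_ofPred_eq]
    grind

theorem evalFrom_append (u : List A) (r s : List (RLetter A)) (q : ℕ) :
    evalFrom u (r ++ s) q = (evalFrom u r q).bind (evalFrom u s) := by
  induction r generalizing q with
  | nil => rfl
  | cons z r ih => simp only [List.cons_append, evalFrom, ih, Option.bind_assoc]

theorem evalFrom_singleton (u : List A) (z : RLetter A) (q : ℕ) :
    evalFrom u [z] q = stepR u z q := by
  simp [evalFrom]

theorem evalR_concat (hr : r ≠ []) : evalR u (r ++ [z]) = (evalR u r).bind (stepR u z) := by
  obtain ⟨y, t, rfl⟩ := List.exists_cons_of_ne_nil hr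
  exact (evalFrom_append u (y :: t) [z] _).trans (by simp only [evalR, evalFrom_singleton])

theorem evalR_singleton (u : List A) (z : RLetter A) :
    evalR u [z] = stepR u z (searchStart z (0, u.length + 1)) := by
  cases z <;> exact evalFrom_singleton u _ _

theorem trace_evalR_eq (h : (ofWord u).Trace r I p) : evalR u r = some p := by
  induction h with
  | single hz => exact (evalR_singleton u _).trans (hit_ofWord_iff.1 hz).1
  | concat hr hz ih =>
    rw [evalR_concat hr.ne_nil, ih, Option.bind_some]
    simpa only [searchStart_narrow] using (hit_ofWord_iff.1 hz).1

theorem evalR_concat_eq_stepR {c : ℕ → ℕ × ℕ} (h : IsWindowChain (ofWord u) (r ++ [z]) c) :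
    evalR u (r ++ [z]) = stepR u z (searchStart z (c r.length)) := by
  obtain rfl | ⟨r, y, rfl⟩ := r.eq_nil_or_concat'
  · rw [List.nil_append, List.length_nil, h.zero]
    exact evalR_singleton u z
  · obtain ⟨h, q, hq, hlast⟩ := isWindowChain_concat_concat_iff.1 h
    have htrace := trace_concat_iff_isWindowChain.2 ⟨hq, c, h, rfl⟩
    rw [evalR_concat (by simp), trace_evalR_eq htrace, List.length_append, List.length_singleton,
      hlast, searchStart_narrow, Option.bind_some]

theorem visits_concat_iff_isWindowChain :
    (ofWord u).Visits (r ++ [z]) p ↔ evalR u (r ++ [z]) = some p ∧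
      ∃ c, IsWindowChain (ofWord u) (r ++ [z]) c ∧ (c r.length).1 < p ∧ p < (c r.length).2 := by
  simp only [Visits, trace_concat_iff_isWindowChain, hit_ofWord_iff]
  constructor
  · rintro ⟨_, ⟨hp, hlt⟩, c, hc, rfl⟩
    exact ⟨(evalR_concat_eq_stepR hc).trans hp, c, hc, hlt⟩
  · rintro ⟨hp, c, hc, hlt⟩
    exact ⟨_, ⟨(evalR_concat_eq_stepR hc).symm.trans hp, hlt⟩, c, hc, rfl⟩

/-- The chains of open intervals in the definition of `Condensed`, whose four update rules amount
to narrowing the interval by the next letter. -/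
structure IsCondensedChain (u : List A) (r : List (RLetter A)) (c : ℕ → ℕ × ℕ) (p : ℕ) :
    Prop where
  eval : evalR u r = some p
  zero : c 0 = (0, u.length + 1)
  step : ∀ k y z, r[k]? = some y → r[k + 1]? = some z →
    ∃ q, stepR u y (searchStart y (c k)) = some q ∧ c (k + 1) = narrow z (c k) q
  nested : ∀ k, k + 1 < r.length → (c k).1 ≤ (c (k + 1)).1 ∧ (c (k + 1)).2 ≤ (c k).2 ∧
    ((c k).1 < (c (k + 1)).1 ∨ (c (k + 1)).2 < (c k).2)
  left_lt : (c (r.length - 1)).1 < p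
  lt_right : p < (c (r.length - 1)).2

theorem condensed_iff_exists_isCondensedChain :
    Condensed u r ↔ ∃ p c, IsCondensedChain u r c p := by
  constructor
  · rintro ⟨p, i, j, hp, hi, hj, hXX, hYY, hXY, hYX, hnest, hlt⟩
    refine ⟨p, fun k => (i k, j k), hp, Prod.ext hi hj, ?_, fun k => hnest (k + 1) (by omega),
      hlt.1, hlt.2⟩
    rintro k (a | a) (b | b) hy hz
    · obtain ⟨hq, hj⟩ := hXX (k + 1) a b (by omega) hy hz
      exact ⟨_, hq, Prod.ext rfl hj⟩
    · obtain ⟨hi, hq⟩ := hXY (k + 1) a b (by omega) hy hz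
      exact ⟨_, hq, Prod.ext hi rfl⟩
    · obtain ⟨hq, hj⟩ := hYX (k + 1) a b (by omega) hy hz
      exact ⟨_, hq, Prod.ext rfl hj⟩
    · obtain ⟨hi, hq⟩ := hYY (k + 1) a b (by omega) hy hz
      exact ⟨_, hq, Prod.ext hi rfl⟩
  · rintro ⟨p, c, h⟩
    refine ⟨p, fun k => (c k).1, fun k => (c k).2, h.eval, congrArg Prod.fst h.zero,
      congrArg Prod.snd h.zero, ?_, ?_, ?_, ?_, ?_, h.left_lt, h.lt_right⟩
    case refine_5 =>
      intro ℓ hℓ hlen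
      obtain ⟨k, rfl⟩ := Nat.exists_eq_add_of_le' hℓ
      exact h.nested k hlen
    all_goals
      intro ℓ a b hℓ hy hz
      obtain ⟨k, rfl⟩ := Nat.exists_eq_add_of_le' hℓ
      obtain ⟨q, hq, hc⟩ := h.step k _ _ hy hz
      simpa only [hc, narrow, stepR, searchStart, Nat.add_sub_cancel, and_true, true_and] using hq

namespace IsCondensedChain

variable {c : ℕ → ℕ × ℕ}

theorem mem_Ioo (h : IsCondensedChain u r c p) {k : ℕ} (hk : k < r.length) :
    p ∈ Set.Ioo (c k).1 (c k).2 := by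
  induction Nat.le_sub_one_of_lt hk using Nat.decreasingInduction with
  | self => exact ⟨h.left_lt, h.lt_right⟩
  | of_succ k hlt ih =>
    have hk : k + 1 < r.length := by omega
    obtain ⟨hleft, hright, -⟩ := h.nested k hk
    exact ⟨hleft.trans_lt (ih hk).1, (ih hk).2.trans_le hright⟩

theorem isWindowChain (h : IsCondensedChain u r c p) : IsWindowChain (ofWord u) r c where
  zero := h.zero
  succ k y z hy hz := by
    have hk := (List.getElem?_eq_some_iff.1 hz).1
    obtain ⟨q, hq, hc⟩ := h.step k y z hy hz
    refine ⟨q, hit_ofWord_iff.2 ⟨hq, ?_⟩, hc⟩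
    obtain ⟨-, -, hstrict⟩ := h.nested k hk
    have hmem := h.mem_Ioo hk
    have hmem' := h.mem_Ioo (Nat.lt_of_succ_lt hk)
    rw [hc] at hstrict hmem
    cases z with
    | X b => exact ⟨hstrict.resolve_right (lt_irrefl _), hmem.1.trans hmem'.2⟩
    | Y b => exact ⟨hmem'.1.trans hmem.2, hstrict.resolve_left (lt_irrefl _)⟩

end IsCondensedChain

theorem isCondensedChain_of_isWindowChain {c : ℕ → ℕ × ℕ} (h : IsWindowChain (ofWord u) r c)
    (heval : evalR u r = some p) (hleft : (c (r.length - 1)).1 < p)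
    (hright : p < (c (r.length - 1)).2) : IsCondensedChain u r c p where
  eval := heval
  zero := h.zero
  step k y z hy hz :=
    let ⟨q, hq, hc⟩ := h.succ k y z hy hz
    ⟨q, (hit_ofWord_iff.1 hq).1, hc⟩
  nested k hk := by
    obtain ⟨q, hq, hc⟩ := h.succ k _ _ (List.getElem?_eq_getElem (Nat.lt_of_succ_lt hk))
      (List.getElem?_eq_getElem hk)
    rw [hc]
    cases r[k + 1] with
    | X b => exact ⟨hq.left_lt.le, le_rfl, Or.inl hq.left_lt⟩
    | Y b => exact ⟨le_rfl, hq.lt_right.le, Or.inr hq.lt_right⟩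
  left_lt := hleft
  lt_right := hright

theorem visits_iff_exists_isCondensedChain :
    (ofWord u).Visits r p ↔ ∃ c, IsCondensedChain u r c p := by
  obtain rfl | ⟨r, z, rfl⟩ := r.eq_nil_or_concat'
  · exact iff_of_false (fun h => h.ne_nil rfl) fun ⟨_, h⟩ => by simpa [evalR] using h.eval
  rw [visits_concat_iff_isWindowChain]
  have hlast : (r ++ [z]).length - 1 = r.length := by simp
  constructor
  · rintro ⟨heval, c, hc, hlt⟩
    rw [← hlast] at hlt
    exact ⟨c, isCondensedChain_of_isWindowChain hc heval hlt.1 hlt.2⟩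
  · rintro ⟨c, hc⟩
    exact ⟨hc.eval, c, hc.isWindowChain, hlast ▸ hc.left_lt, hlast ▸ hc.lt_right⟩

theorem condensed_iff_condenses : Condensed u r ↔ (ofWord u).Condenses r := by
  simp only [condensed_iff_exists_isCondensedChain, Condenses, visits_iff_exists_isCondensedChain]

theorem visits_pos (h : Condensed u r) : (ofWord u).Visits r (pos u r) := by
  obtain ⟨p, c, hc⟩ := condensed_iff_exists_isCondensedChain.1 h
  rw [pos, hc.eval]
  exact visits_iff_exists_isCondensedChain.2 ⟨c, hc⟩

theorem agree_true_of_trir {m n : ℕ} (h : trir (m + 1) n u v) :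
    Agree true m n (ofWord u) (ofWord v) := by
  intro r hr
  rw [← condensed_iff_condenses, ← condensed_iff_condenses]
  exact h r (uRX_iff.2 hr)

theorem agree_false_of_tril {m n : ℕ} (h : tril (m + 1) n u v) :
    Agree false m n (ofWord u) (ofWord v) := by
  intro r hr
  rw [← condensed_iff_condenses, ← condensed_iff_condenses]
  exact h r (uRY_iff.2 hr)

theorem compare_pos_eq_of_sameOrder {r' : List (RLetter A)}
    (h : SameOrder (ofWord u) (ofWord v) r r') (hu : Condensed u r) (hv : Condensed v r)
    (hu' : Condensed u r') (hv' : Condensed v r') :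
    compare (pos u r) (pos u r') = compare (pos v r) (pos v r') := by
  obtain ⟨hlt, hgt⟩ := h (visits_pos hu) (visits_pos hu') (visits_pos hv) (visits_pos hv')
  obtain hlt' | heq | hgt' := lt_trichotomy (pos u r) (pos u r')
  · rw [compare_lt_iff_lt.2 hlt', compare_lt_iff_lt.2 (hlt.1 hlt')]
  · have heq' : pos v r = pos v r' :=
      le_antisymm (not_lt.1 (hgt.not.1 heq.le.not_gt)) (not_lt.1 (hlt.not.1 heq.ge.not_gt))
    rw [compare_eq_iff_eq.2 heq, compare_eq_iff_eq.2 heq']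
  · rw [compare_gt_iff_gt.2 hgt', compare_gt_iff_gt.2 (hgt.1 hgt')]

theorem numBlocks_le_of_uRXm {α : Type*} {m : ℕ} {r : List (RLetter α)} (h : uRXm m r) :
    numBlocks r ≤ m := by
  obtain ⟨_, _, ⟨_, _, hm, _, rfl, _⟩ | ⟨_, _, hm, _, rfl, _⟩⟩ := h
  exacts [hm, hm.le]

theorem numBlocks_le_of_uRYm {α : Type*} {m : ℕ} {r : List (RLetter α)} (h : uRYm m r) :
    numBlocks r ≤ m := by
  obtain ⟨_, _, ⟨_, _, hm, _, rfl, _⟩ | ⟨_, _, hm, _, rfl, _⟩⟩ := h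
  exacts [hm, hm.le]

end Words

/-- Order comparison of condensed rankers starting with opposite
directions. -/
theorem statement12 (m n : ℕ) (hm : 1 ≤ m) (hmn : m < n)
    (a b : A) (s s' : List (RLetter A)) (u v : List A)
    (hr : uRXm m (RLetter.X a :: s)) (hr' : uRYm m (RLetter.Y b :: s'))
    (hlen : (RLetter.X a :: s).length + (RLetter.Y b :: s').length ≤ n)
    (hcu : Condensed u (RLetter.X a :: s)) (hcv : Condensed v (RLetter.X a :: s))
    (hcu' : Condensed u (RLetter.Y b :: s')) (hcv' : Condensed v (RLetter.Y b :: s'))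
    (hrel : trir (m+1) n u v ∨ tril (m+1) n u v) :
    compare (pos u (RLetter.X a :: s)) (pos u (RLetter.Y b :: s')) =
      compare (pos v (RLetter.X a :: s)) (pos v (RLetter.Y b :: s')) := by
  have hblocks : numBlocks (RLetter.X a :: s) ≤ m := numBlocks_le_of_uRXm hr
  have hblocks' : numBlocks (RLetter.Y b :: s') ≤ m := numBlocks_le_of_uRYm hr'
  refine compare_pos_eq_of_sameOrder ?_ hcu hcv hcu' hcv'
  obtain hagree | hagree := hrel.imp agree_true_of_trir agree_false_of_tril
  · exact LabelledOrder.sameOrder_of_agree hagree ⟨rfl, rfl, hblocks, hblocks', hlen⟩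
  · have hpair : OpposedPair false m n (RLetter.Y b :: s') (RLetter.X a :: s) :=
      ⟨rfl, rfl, hblocks', hblocks, (Nat.add_comm _ _).trans_le hlen⟩
    exact (LabelledOrder.sameOrder_of_agree hagree hpair).swap

end RankerPaper
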